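/- For all μ ∈ [0, 1) and all a ≥ 0, [(2μ² − a² − 1)(1 − aμ) + 2μ²(1 − μ²)] · exp(aμ/(1 − μ²)) − [(2μ² − a² − 1)(1 + aμ) + 2μ²(1 − μ²)] · exp(−aμ/(1 − μ²)) ≥ 0. -/

import Mathlib

/-!
Put `x = aμ / (1 - μ²)`. Half the left-hand side is
`μ² (1 - a²) sinh x + (a² + 1 - 2μ²) (1 - μ²) (x cosh x - sinh x)`, where the difference
`x cosh x - sinh x` lies between `x² sinh x / (3 + x)` and `x sinh x` for `x ≥ 0`. The lower bound
is the Padé inequality `(3 - y) exp y ≤ 3 + 2y + y² / 2` at `y = 2x`, the upper one is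
`1 + y ≤ exp y`. Inserting the lower bound if `a² + 1 - 2μ² ≥ 0`, and the upper one otherwise,
leaves a polynomial inequality in `a` and `μ`.
-/

open Real

theorem three_sub_mul_exp_le (y : ℝ) : (3 - y) * exp y ≤ 3 + 2 * y + y ^ 2 / 2 := by
  let f : ℝ → ℝ := fun y ↦ (y - 3) * exp y + (3 + 2 * y + y ^ 2 / 2)
  let f' : ℝ → ℝ := fun y ↦ (y - 2) * exp y + (y + 2)
  have hf (y : ℝ) : HasDerivAt f (f' y) y := by
    refine ((((hasDerivAt_id' y).sub_const 3).mul (hasDerivAt_exp y)).add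
      ((((hasDerivAt_id' y).const_mul 2).const_add 3).add
        ((hasDerivAt_pow 2 y).div_const 2))).congr_deriv ?_
    simp only [f']
    ring
  have hf' (y : ℝ) : HasDerivAt f' ((y - 1) * exp y + 1) y := by
    refine ((((hasDerivAt_id' y).sub_const 2).mul (hasDerivAt_exp y)).add
      ((hasDerivAt_id' y).add_const 2)).congr_deriv ?_
    ring
  have hf'_mono : Monotone f' := by
    refine monotone_of_hasDerivAt_nonneg hf' fun y ↦ ?_
    have h : (1 - y) * exp y ≤ exp (-y) * exp y := by gcongr; exact one_sub_le_exp_neg y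
    rw [← exp_add, neg_add_cancel, exp_zero] at h
    simp only [Pi.zero_apply]
    linarith
  have hf_zero : f 0 = 0 := by norm_num [f]
  have hf'_zero : f' 0 = 0 := by norm_num [f']
  have hf_diff : Differentiable ℝ f := fun y ↦ (hf y).differentiableAt
  have hf_min : IsMinOn f Set.univ 0 :=
    isMinOn_univ_of_deriv (hf 0).continuousAt hf_diff.differentiableOn hf_diff.differentiableOn
      (fun y hy ↦ (hf y).deriv.trans_le ((hf'_mono (le_of_lt hy)).trans_eq hf'_zero))
      (fun y hy ↦ (hf'_zero.symm.trans_le (hf'_mono (le_of_lt hy))).trans_eq (hf y).deriv.symm)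
  have h : 0 ≤ (y - 3) * exp y + (3 + 2 * y + y ^ 2 / 2) :=
    hf_zero.symm.trans_le (hf_min (Set.mem_univ y))
  linarith

theorem mul_cosh_sub_sinh_le (x : ℝ) : x * cosh x - sinh x ≤ x * sinh x := by
  have h : (2 * x + 1) * exp (-x) ≤ exp (2 * x) * exp (-x) := by
    gcongr
    exact add_one_le_exp (2 * x)
  rw [← exp_add, show 2 * x + -x = x by ring] at h
  rw [cosh_eq, sinh_eq]
  linarith

theorem sq_mul_sinh_le (x : ℝ) : x ^ 2 * sinh x ≤ (3 + x) * (x * cosh x - sinh x) := by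
  have h : (3 - 2 * x) * exp (2 * x) * exp (-x) ≤
      (3 + 2 * (2 * x) + (2 * x) ^ 2 / 2) * exp (-x) := by
    gcongr
    exact three_sub_mul_exp_le (2 * x)
  rw [mul_assoc, ← exp_add, show 2 * x + -x = x by ring] at h
  rw [cosh_eq, sinh_eq]
  linarith

section

variable {a μ x : ℝ}

theorem quartic_nonneg (hμ : μ ^ 2 ≤ 1) (haμ : 0 ≤ a * μ) (h : 0 ≤ a ^ 2 + 1 - 2 * μ ^ 2) :
    0 ≤ (3 * (1 - μ ^ 2) + a * μ) * (1 - a ^ 2) + a ^ 2 * (a ^ 2 + 1 - 2 * μ ^ 2) := by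
  have hs : 0 ≤ 1 - μ ^ 2 := sub_nonneg.2 hμ
  rcases le_total (a ^ 2) 1 with ha | ha
  · have : 0 ≤ 1 - a ^ 2 := sub_nonneg.2 ha
    positivity
  · have h_amgm : a * μ * (a ^ 2 - 1) ≤ (a ^ 2 + μ ^ 2) / 2 * (a ^ 2 - 1) :=
      mul_le_mul_of_nonneg_right (by linarith [two_mul_le_add_sq a μ]) (sub_nonneg.2 ha)
    -- With `b = a² - 1` and `s = 1 - μ²`, what remains is `0 ≤ (b - s / 2)² / 2 + 2s - s² / 8`.
    linarith [sq_nonneg (a ^ 2 - 1 - (1 - μ ^ 2) / 2), mul_nonneg hs (sq_nonneg μ)]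

theorem sinh_cosh_combination_nonneg_of_nonneg (hμ : μ ^ 2 < 1) (hx : 0 ≤ x)
    (hxμ : (1 - μ ^ 2) * x = a * μ) (h : 0 ≤ a ^ 2 + 1 - 2 * μ ^ 2) :
    0 ≤ μ ^ 2 * (1 - a ^ 2) * sinh x +
      (a ^ 2 + 1 - 2 * μ ^ 2) * (1 - μ ^ 2) * (x * cosh x - sinh x) := by
  have hs : 0 < 1 - μ ^ 2 := sub_pos.2 hμ
  have haμ : 0 ≤ a * μ := hxμ ▸ mul_nonneg hs.le hx
  refine nonneg_of_mul_nonneg_right (a := (1 - μ ^ 2) * (3 + x)) ?_ (by positivity)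
  calc
    0 ≤ μ ^ 2 * ((3 * (1 - μ ^ 2) + a * μ) * (1 - a ^ 2) +
          a ^ 2 * (a ^ 2 + 1 - 2 * μ ^ 2)) * sinh x := by
      have := quartic_nonneg hμ.le haμ h
      positivity
    _ = (1 - μ ^ 2) * (3 + x) * (μ ^ 2 * (1 - a ^ 2) * sinh x) +
          (a ^ 2 + 1 - 2 * μ ^ 2) * (1 - μ ^ 2) ^ 2 * (x ^ 2 * sinh x) := by
      linear_combination (-(μ ^ 2 * (1 - a ^ 2)) -
        (a ^ 2 + 1 - 2 * μ ^ 2) * ((1 - μ ^ 2) * x + a * μ)) * sinh x * hxμ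
    _ ≤ (1 - μ ^ 2) * (3 + x) * (μ ^ 2 * (1 - a ^ 2) * sinh x) +
          (a ^ 2 + 1 - 2 * μ ^ 2) * (1 - μ ^ 2) ^ 2 *
            ((3 + x) * (x * cosh x - sinh x)) := by
      gcongr _ + _ * ?_
      exact sq_mul_sinh_le x
    _ = (1 - μ ^ 2) * (3 + x) * (μ ^ 2 * (1 - a ^ 2) * sinh x +
          (a ^ 2 + 1 - 2 * μ ^ 2) * (1 - μ ^ 2) * (x * cosh x - sinh x)) := by
      ring

theorem sinh_cosh_combination_nonneg_of_nonpos (hμ : μ ^ 2 ≤ 1) (hx : 0 ≤ x)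
    (hxμ : (1 - μ ^ 2) * x = a * μ) (h : a ^ 2 + 1 - 2 * μ ^ 2 ≤ 0) :
    0 ≤ μ ^ 2 * (1 - a ^ 2) * sinh x +
      (a ^ 2 + 1 - 2 * μ ^ 2) * (1 - μ ^ 2) * (x * cosh x - sinh x) := by
  have hs : 0 ≤ 1 - μ ^ 2 := sub_nonneg.2 hμ
  have haμ : a * μ ≤ μ ^ 2 := by linarith [two_mul_le_add_sq a μ]
  calc
    0 ≤ 2 * μ ^ 2 * (1 - μ ^ 2) * sinh x := by positivity
    _ = μ ^ 2 * (1 - a ^ 2) * sinh x + (a ^ 2 + 1 - 2 * μ ^ 2) * (μ ^ 2 * sinh x) := by ring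
    _ ≤ μ ^ 2 * (1 - a ^ 2) * sinh x + (a ^ 2 + 1 - 2 * μ ^ 2) * (a * μ * sinh x) := by
      refine add_le_add le_rfl (mul_le_mul_of_nonpos_left ?_ h)
      gcongr
    _ = μ ^ 2 * (1 - a ^ 2) * sinh x +
          (a ^ 2 + 1 - 2 * μ ^ 2) * (1 - μ ^ 2) * (x * sinh x) := by
      rw [← hxμ]
      ring
    _ ≤ μ ^ 2 * (1 - a ^ 2) * sinh x +
          (a ^ 2 + 1 - 2 * μ ^ 2) * (1 - μ ^ 2) * (x * cosh x - sinh x) :=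
      add_le_add le_rfl <| mul_le_mul_of_nonpos_left (mul_cosh_sub_sinh_le x) <|
        mul_nonpos_of_nonpos_of_nonneg h hs

theorem critical_inequality_general (hμ : |μ| < 1) (haμ : 0 ≤ a * μ) :
    ((2*μ^2 - a^2 - 1)*(1 - a*μ) + 2*μ^2*(1 - μ^2)) * Real.exp (a*μ/(1 - μ^2))
      - ((2*μ^2 - a^2 - 1)*(1 + a*μ) + 2*μ^2*(1 - μ^2)) * Real.exp (-(a*μ)/(1 - μ^2)) ≥ 0 := by
  have hμ_sq : μ ^ 2 < 1 := (sq_lt_one_iff_abs_lt_one μ).2 hμ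
  have hs : 0 < 1 - μ ^ 2 := sub_pos.2 hμ_sq
  rw [neg_div]
  set x := a * μ / (1 - μ ^ 2)
  have hx : 0 ≤ x := div_nonneg haμ hs.le
  have hxμ : (1 - μ ^ 2) * x = a * μ := mul_div_cancel₀ _ hs.ne'
  have h_comb : 0 ≤ μ ^ 2 * (1 - a ^ 2) * sinh x +
      (a ^ 2 + 1 - 2 * μ ^ 2) * (1 - μ ^ 2) * (x * cosh x - sinh x) :=
    (le_total 0 (a ^ 2 + 1 - 2 * μ ^ 2)).elim
      (sinh_cosh_combination_nonneg_of_nonneg hμ_sq hx hxμ)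
      (sinh_cosh_combination_nonneg_of_nonpos hμ_sq.le hx hxμ)
  rw [← cosh_add_sinh, ← cosh_sub_sinh, ← hxμ]
  linarith

end

theorem critical_inequality (μ a : ℝ) (hμ0 : 0 ≤ μ) (hμ1 : μ < 1) (ha : 0 ≤ a) :
    ((2*μ^2 - a^2 - 1)*(1 - a*μ) + 2*μ^2*(1 - μ^2)) * Real.exp (a*μ/(1 - μ^2))
      - ((2*μ^2 - a^2 - 1)*(1 + a*μ) + 2*μ^2*(1 - μ^2)) * Real.exp (-(a*μ)/(1 - μ^2)) ≥ 0 :=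
  critical_inequality_general ((abs_of_nonneg hμ0).trans_lt hμ1) (mul_nonneg ha hμ0)
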